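/- Let 0 < α₂ < α₁ < 1, C₁ > 0, C₂ ≥ 0 with C₁ + C₂ = 1, and λ > 0. Define f_W(t) = (λ t^{α₁−1}/C₁) Σ_{k=0}^∞ (−C₂ t^{α₁−α₂}/C₁)^k E^{k+1}_{α₁, α₁+(α₁−α₂)k}(−λ t^{α₁}/C₁) for t > 0. Then for every s > 0 satisfying C₂ s^{α₂} < C₁ s^{α₁} + λ, the Laplace transform identity ∫₀^∞ e^{−st} f_W(t) dt = λ / (C₁ s^{α₁} + C₂ s^{α₂} + λ) holds. -/

import Mathlib

open MeasureTheory Filter Real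

noncomputable section

/-- Three-parameter Mittag-Leffler function `E^γ_{α,β}(z)`. -/
noncomputable def ml (α β γ z : ℝ) : ℝ :=
  ∑' k : ℕ, (∏ j ∈ Finset.range k, (γ + j)) / (Nat.factorial k) * z ^ k / Real.Gamma (k * α + β)

open scoped unitInterval fwdDiff BoundedContinuousFunction

/-!
Integrating the double power series of `f_W` termwise gives the identity only for large `s`, where
the series `∑ (n + k).choose k * y ^ n * x ^ k = (1 - x - y)⁻¹` converges absolutely. The
right-hand side `g = λ / φ` is completely monotone on all of `(0, ∞)`, because `φ` is a Bernstein
function: `φ > 0` and `φ'` is completely monotone. Since `(-Δ_[1])^[m] g (s + k)` is the Laplace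
transform at `s` of `e^{-kt} (1 - e^{-t})^m f_W`, Hausdorff's moment criterion in the variable
`x = e^{-t}` yields `f_W ≥ 0` almost everywhere. The identity then descends in steps of `δ < s`:
as `e^{δt} = ∑ (1 - e^{-δt})^m` and all terms are nonnegative, the transform at `s` is the
Gregory–Newton series `∑ (-Δ_[δ])^[m] g (s + δ)`, which telescopes to `g s`.
-/

section SeriesOfIntegrableFunctions

variable {ι Ω E : Type*} [MeasurableSpace Ω] {μ : Measure Ω} [NormedAddCommGroup E]
  {F : ι → Ω → E}

theorem tsum_eLpNorm_one_ne_top_of_summable_integral_norm (hF : ∀ i, Integrable (F i) μ)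
    (hsum : Summable fun i => ∫ ω, ‖F i ω‖ ∂μ) : ∑' i, eLpNorm (F i) 1 μ ≠ ⊤ := by
  have heLp (i : ι) : eLpNorm (F i) 1 μ = ENNReal.ofReal (∫ ω, ‖F i ω‖ ∂μ) := by
    rw [eLpNorm_one_eq_lintegral_enorm, ofReal_integral_norm_eq_lintegral_enorm (hF i)]
  simp_rw [heLp]
  exact hsum.tsum_ofReal_ne_top

theorem ae_summable_norm_of_summable_integral_norm [Countable ι]
    (hF : ∀ i, Integrable (F i) μ) (hsum : Summable fun i => ∫ ω, ‖F i ω‖ ∂μ) :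
    ∀ᵐ ω ∂μ, Summable fun i => ‖F i ω‖ :=
  summable_norm_of_tsum_eLpNorm_ne_top le_rfl (fun i => (hF i).aestronglyMeasurable)
    (tsum_eLpNorm_one_ne_top_of_summable_integral_norm hF hsum)

theorem integrable_tsum_of_summable_integral_norm [Countable ι] [CompleteSpace E]
    (hF : ∀ i, Integrable (F i) μ) (hsum : Summable fun i => ∫ ω, ‖F i ω‖ ∂μ) :
    Integrable (fun ω => ∑' i, F i ω) μ := by
  have hL1 : ∑' i, ‖(hF i).toL1 (F i)‖ₑ ≠ ⊤ := by
    simpa only [Integrable.enorm_toL1, ← eLpNorm_one_eq_lintegral_enorm] using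
      tsum_eLpNorm_one_ne_top_of_summable_integral_norm hF hsum
  refine (L1.integrable_coeFn (∑' i, (hF i).toL1 (F i))).congr ?_
  filter_upwards [Lp.coeFn_tsum hL1, ae_all_iff.2 fun i => (hF i).coeFn_toL1] with ω hω hFω
  simp only [hω, hFω]

end SeriesOfIntegrableFunctions

section HausdorffPositivity

theorem nonneg_of_forall_bernstein_nonneg (Λ : C(I, ℝ) →L[ℝ] ℝ)
    (hΛ : ∀ n k, 0 ≤ Λ (bernstein n k)) {φ : C(I, ℝ)} (hφ : 0 ≤ φ) : 0 ≤ Λ φ := by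
  refine ge_of_tendsto' ((Λ.continuous.tendsto φ).comp (bernsteinApproximation_uniform φ))
    fun n => ?_
  have hexpand : bernsteinApproximation n φ =
      ∑ k : Fin (n + 1), φ (bernstein.z k) • bernstein n k := by
    ext x
    simp [bernsteinApproximation.apply, mul_comm]
  simp only [Function.comp_apply, hexpand, map_sum, map_smul]
  exact Finset.sum_nonneg fun k _ => smul_nonneg (hφ _) (hΛ n k)

variable {Ω : Type*} [MeasurableSpace Ω] {μ : Measure Ω} {G : Ω → ℝ}

theorem integrable_boundedContinuous_comp_mul {Y : Type*} [TopologicalSpace Y] [MeasurableSpace Y]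
    [OpensMeasurableSpace Y] {X : Ω → Y} (hX : Measurable X) (hG : Integrable G μ) (φ : Y →ᵇ ℝ) :
    Integrable (fun ω => φ (X ω) * G ω) μ :=
  hG.bdd_mul (φ.continuous.measurable.comp hX).aestronglyMeasurable
    (Eventually.of_forall fun ω => φ.norm_coe_le_norm (X ω))

theorem integral_comp_mul_nonneg_of_moments {X : Ω → I} (hX : Measurable X) (hG : Integrable G μ)
    (hmoment : ∀ k m : ℕ, 0 ≤ ∫ ω, (X ω : ℝ) ^ k * (1 - X ω) ^ m * G ω ∂μ)
    {φ : C(I, ℝ)} (hφ : 0 ≤ φ) : 0 ≤ ∫ ω, φ (X ω) * G ω ∂μ := by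
  have hint (ψ : C(I, ℝ)) : Integrable (fun ω => ψ (X ω) * G ω) μ :=
    integrable_boundedContinuous_comp_mul hX hG (.mkOfCompact ψ)
  let Λ : C(I, ℝ) →L[ℝ] ℝ := LinearMap.mkContinuous
    { toFun := fun ψ => ∫ ω, ψ (X ω) * G ω ∂μ
      map_add' := fun ψ χ => by
        simp only [ContinuousMap.add_apply, add_mul]
        exact integral_add (hint ψ) (hint χ)
      map_smul' := fun c ψ => by
        simp only [ContinuousMap.smul_apply, smul_eq_mul, mul_assoc, RingHom.id_apply,
          integral_const_mul] }
    (∫ ω, ‖G ω‖ ∂μ) fun ψ => by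
      rw [← integral_mul_const]
      refine norm_integral_le_of_norm_le (hG.norm.mul_const _) (Eventually.of_forall fun ω => ?_)
      rw [norm_mul, mul_comm]
      exact mul_le_mul_of_nonneg_left (ψ.norm_coe_le_norm _) (norm_nonneg _)
  refine nonneg_of_forall_bernstein_nonneg Λ (fun n k => ?_) hφ
  have hbernstein : Λ (bernstein n k) =
      n.choose k * ∫ ω, (X ω : ℝ) ^ k * (1 - X ω) ^ (n - k) * G ω ∂μ := by
    simp only [Λ, LinearMap.mkContinuous_apply, LinearMap.coe_mk, AddHom.coe_mk, bernstein_apply,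
      mul_assoc, integral_const_mul]
  rw [hbernstein]
  exact mul_nonneg (Nat.cast_nonneg _) (hmoment k (n - k))

variable {Y : Type*} [TopologicalSpace Y] [TopologicalSpace.PseudoMetrizableSpace Y]
  [MeasurableSpace Y] [BorelSpace Y] {X : Ω → Y}

theorem exists_boundedContinuous_integral_abs_indicator_sub_mul_le (hX : Measurable X)
    (hG : Integrable G μ) {B : Set Y} (hB : MeasurableSet B) {ε : ℝ} (hε : 0 < ε) :
    ∃ φ : Y →ᵇ ℝ, 0 ≤ φ ∧ ∫ ω, |B.indicator 1 (X ω) - φ (X ω)| * |G ω| ∂μ ≤ ε := by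
  set ρ : Measure Ω := μ.withDensity fun ω => ‖G ω‖ₑ
  have : IsFiniteMeasure ρ := isFiniteMeasure_withDensity hG.2.ne
  obtain ⟨ψ, hψ, -⟩ := ((integrable_const (1 : ℝ)).indicator hB
    (μ := ρ.map X)).exists_boundedContinuous_integral_sub_le hε
  have hρ : ∫ ω, |B.indicator 1 (X ω) - ψ (X ω)| * |G ω| ∂μ =
      ∫ y, ‖B.indicator (fun _ => 1) y - ψ y‖ ∂ρ.map X := by
    rw [integral_map hX.aemeasurable (by fun_prop (disch := exact hB)),
      integral_withDensity_eq_integral_toReal_smul₀ hG.aestronglyMeasurable.enorm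
        (Eventually.of_forall fun ω => enorm_lt_top)]
    simp only [toReal_enorm, norm_eq_abs, smul_eq_mul, mul_comm, Pi.one_def]
  have hbound (ω : Ω) : |B.indicator (1 : Y → ℝ) (X ω) - max (ψ (X ω)) 0| ≤
      |B.indicator 1 (X ω) - ψ (X ω)| := by
    have hnonneg : (0 : ℝ) ≤ B.indicator 1 (X ω) := Set.indicator_nonneg (fun _ _ => zero_le_one) _
    simpa only [max_eq_left hnonneg] using abs_max_sub_max_le_abs (B.indicator 1 (X ω)) (ψ (X ω)) 0
  refine ⟨ψ ⊔ 0, le_sup_right, (integral_mono_of_nonneg ?_ ?_ ?_).trans (hρ.trans_le hψ)⟩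
  · exact Eventually.of_forall fun ω => by positivity
  · refine hG.norm.bdd_mul (c := 1 + ‖ψ‖) ?_ (Eventually.of_forall fun ω => ?_)
    · exact (((measurable_const.indicator hB).comp hX).sub
        (ψ.continuous.measurable.comp hX)).abs.aestronglyMeasurable
    · rw [norm_eq_abs, abs_abs]
      refine (abs_sub _ _).trans (add_le_add ?_ (ψ.norm_coe_le_norm _))
      by_cases hω : X ω ∈ B <;> simp [hω]
  · exact Eventually.of_forall fun ω => mul_le_mul_of_nonneg_right (hbound ω) (abs_nonneg _)

theorem setIntegral_preimage_nonneg (hX : Measurable X) (hG : Integrable G μ)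
    (h : ∀ φ : Y →ᵇ ℝ, 0 ≤ φ → 0 ≤ ∫ ω, φ (X ω) * G ω ∂μ) {B : Set Y} (hB : MeasurableSet B) :
    0 ≤ ∫ ω in X ⁻¹' B, G ω ∂μ := by
  refine le_of_forall_pos_le_add fun ε hε => ?_
  obtain ⟨φ, hφ, hclose⟩ :=
    exists_boundedContinuous_integral_abs_indicator_sub_mul_le hX hG hB hε
  have hφG : Integrable (fun ω => φ (X ω) * G ω) μ := integrable_boundedContinuous_comp_mul hX hG φ
  have hBG : Integrable ((X ⁻¹' B).indicator G) μ := hG.indicator (hX hB)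
  have hdist : ∫ ω, φ (X ω) * G ω ∂μ - ∫ ω in X ⁻¹' B, G ω ∂μ ≤ ε := by
    rw [← integral_indicator (hX hB), ← integral_sub hφG hBG]
    refine (le_norm_self _).trans ((norm_integral_le_integral_norm _).trans
      (le_of_eq_of_le ?_ hclose))
    refine integral_congr_ae (Eventually.of_forall fun ω => ?_)
    by_cases hω : X ω ∈ B <;> simp [hω, ← abs_mul, sub_mul, abs_sub_comm]
  linarith [h φ hφ]

theorem ae_nonneg_of_moments {X : Ω → I} (hX : Measurable X) {Z : I → Ω} (hZ : Measurable Z)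
    (hZX : ∀ᵐ ω ∂μ, Z (X ω) = ω) (hG : Integrable G μ)
    (hmoment : ∀ k m : ℕ, 0 ≤ ∫ ω, (X ω : ℝ) ^ k * (1 - X ω) ^ m * G ω ∂μ) : 0 ≤ᵐ[μ] G := by
  refine ae_nonneg_of_forall_setIntegral_nonneg hG fun A hA _ => ?_
  have hpreimage : X ⁻¹' (Z ⁻¹' A) =ᵐ[μ] A := by
    filter_upwards [hZX] with ω hω
    exact congrArg A hω
  rw [← setIntegral_congr_set hpreimage]
  exact setIntegral_preimage_nonneg hX hG
    (fun φ hφ => integral_comp_mul_nonneg_of_moments hX hG hmoment (φ := φ.toContinuousMap) hφ)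
    (hZ hA)

end HausdorffPositivity

section Laplace

variable {f g : ℝ → ℝ} {s L M : ℝ}

/-- The Laplace integral `∫₀^∞ e^{-st} f(t) dt` converges absolutely and equals `L`. -/
def HasLaplaceAt (f : ℝ → ℝ) (s L : ℝ) : Prop :=
  IntegrableOn (fun t => exp (-(s * t)) * f t) (Set.Ioi 0) ∧
    ∫ t in Set.Ioi 0, exp (-(s * t)) * f t = L

namespace HasLaplaceAt

theorem congr_ae (hf : HasLaplaceAt f s L) (hfg : f =ᵐ[volume.restrict (Set.Ioi 0)] g) :
    HasLaplaceAt g s L := by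
  have hexp : (fun t => exp (-(s * t)) * f t) =ᵐ[volume.restrict (Set.Ioi 0)]
      fun t => exp (-(s * t)) * g t := hfg.mono fun t ht => by simp only [ht]
  exact ⟨hf.1.congr hexp, (integral_congr_ae hexp).symm.trans hf.2⟩

theorem congr (hf : HasLaplaceAt f s L) (hfg : Set.EqOn f g (Set.Ioi 0)) : HasLaplaceAt g s L :=
  hf.congr_ae (ae_restrict_of_forall_mem measurableSet_Ioi hfg)

theorem const_mul (c : ℝ) (hf : HasLaplaceAt f s L) :
    HasLaplaceAt (fun t => c * f t) s (c * L) := by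
  simp only [HasLaplaceAt, mul_left_comm _ c]
  exact ⟨hf.1.const_mul c, by rw [integral_const_mul, hf.2]⟩

theorem sub (hf : HasLaplaceAt f s L) (hg : HasLaplaceAt g s M) :
    HasLaplaceAt (fun t => f t - g t) s (L - M) := by
  simp only [HasLaplaceAt, mul_sub]
  exact ⟨hf.1.sub hg.1, by rw [integral_sub hf.1 hg.1, hf.2, hg.2]⟩

theorem exp_mul {δ : ℝ} (hf : HasLaplaceAt f s L) :
    HasLaplaceAt (fun t => exp (δ * t) * f t) (s + δ) L := by
  have hexp (t : ℝ) : exp (-((s + δ) * t)) * (exp (δ * t) * f t) = exp (-(s * t)) * f t := by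
    rw [← mul_assoc, ← exp_add]
    ring_nf
  simpa only [HasLaplaceAt, hexp] using hf

variable {ι : Type*} [Countable ι] {F : ι → ℝ → ℝ} {A B : ι → ℝ}

theorem ae_summable (hF : ∀ i, HasLaplaceAt (F i) s (A i))
    (hFabs : ∀ i, HasLaplaceAt (fun t => |F i t|) s (B i)) (hB : Summable B) :
    ∀ᵐ t ∂volume.restrict (Set.Ioi 0), Summable fun i => F i t := by
  have hnorm : Summable fun i => ∫ t in Set.Ioi 0, ‖exp (-(s * t)) * F i t‖ := by
    simpa only [norm_mul, norm_eq_abs, abs_exp, (hFabs _).2] using hB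
  filter_upwards [ae_summable_norm_of_summable_integral_norm (fun i => (hF i).1) hnorm] with t ht
  exact (summable_mul_left_iff (exp_ne_zero _)).1 ht.of_norm

theorem tsum (hF : ∀ i, HasLaplaceAt (F i) s (A i))
    (hFabs : ∀ i, HasLaplaceAt (fun t => |F i t|) s (B i)) (hB : Summable B) :
    HasLaplaceAt (fun t => ∑' i, F i t) s (∑' i, A i) := by
  have hnorm : Summable fun i => ∫ t in Set.Ioi 0, ‖exp (-(s * t)) * F i t‖ := by
    simpa only [norm_mul, norm_eq_abs, abs_exp, (hFabs _).2] using hB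
  simp only [HasLaplaceAt, ← tsum_mul_left]
  refine ⟨integrable_tsum_of_summable_integral_norm (fun i => (hF i).1) hnorm, ?_⟩
  rw [← integral_tsum_of_summable_integral_norm (fun i => (hF i).1) hnorm]
  simp only [(hF _).2]

end HasLaplaceAt

theorem hasLaplaceAt_rpow {p : ℝ} (hp : 0 < p) (hs : 0 < s) :
    HasLaplaceAt (fun t => t ^ (p - 1)) s (Gamma p * s ^ (-p)) := by
  refine ⟨?_, ?_⟩
  · refine (integrableOn_rpow_mul_exp_neg_mul_rpow (s := p - 1) (by linarith) one_pos hs).congr_fun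
      (fun t _ => ?_) measurableSet_Ioi
    simp only [rpow_one, neg_mul, mul_comm (exp _)]
  · simp only [mul_comm (exp _)]
    rw [integral_rpow_mul_exp_neg_mul_Ioi hp hs, one_div, inv_rpow hs.le, rpow_neg hs.le, mul_comm]

theorem neg_fwdDiff_apply (δ : ℝ) (g : ℝ → ℝ) (s : ℝ) : (-Δ_[δ]) g s = g s - g (s + δ) := by
  simp only [Pi.neg_apply, fwdDiff, neg_sub]

theorem neg_fwdDiff_iterate_succ (δ : ℝ) (g : ℝ → ℝ) (n : ℕ) (s : ℝ) :
    (-Δ_[δ])^[n + 1] g s = (-Δ_[δ])^[n] g s - (-Δ_[δ])^[n] g (s + δ) := by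
  rw [Function.iterate_succ_apply', neg_fwdDiff_apply]

theorem hasLaplaceAt_neg_fwdDiff_iterate {s₀ δ : ℝ} (hf : ∀ s > s₀, HasLaplaceAt f s (g s))
    (hδ : 0 ≤ δ) (n : ℕ) : ∀ s > s₀,
      HasLaplaceAt (fun t => (1 - exp (-δ * t)) ^ n * f t) s ((-Δ_[δ])^[n] g s) := by
  induction n with
  | zero => simpa using hf
  | succ n ih =>
    intro s hs
    rw [neg_fwdDiff_iterate_succ]
    have hshift := (ih (s + δ) (by linarith)).exp_mul (δ := -δ)
    rw [add_neg_cancel_right] at hshift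
    exact ((ih s hs).sub hshift).congr fun t _ => by ring

end Laplace

section CompleteMonotonicity

variable {δ : ℝ} {n : ℕ} {g h : ℝ → ℝ}

/-- Complete monotonicity up to order `n` on `(0, ∞)`, in its finite-difference form with a fixed
step `δ`; unlike the form `0 ≤ (-1)^k g^{(k)}` it needs no derivatives. -/
def IsCompletelyMonotoneUpTo (δ : ℝ) (n : ℕ) (g : ℝ → ℝ) : Prop :=
  ∀ k ≤ n, ∀ s > 0, 0 ≤ (-Δ_[δ])^[k] g s

namespace IsCompletelyMonotoneUpTo

theorem nonneg (hg : IsCompletelyMonotoneUpTo δ n g) {s : ℝ} (hs : 0 < s) : 0 ≤ g s :=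
  hg 0 n.zero_le s hs

theorem mono {m : ℕ} (hg : IsCompletelyMonotoneUpTo δ n g) (hmn : m ≤ n) :
    IsCompletelyMonotoneUpTo δ m g :=
  fun k hk => hg k (hk.trans hmn)

theorem zero_iff : IsCompletelyMonotoneUpTo δ 0 g ↔ ∀ s > 0, 0 ≤ g s := by
  simp [IsCompletelyMonotoneUpTo]

theorem succ_iff : IsCompletelyMonotoneUpTo δ (n + 1) g ↔
    (∀ s > 0, 0 ≤ g s) ∧ IsCompletelyMonotoneUpTo δ n ((-Δ_[δ]) g) := by
  refine ⟨fun hg => ⟨fun s hs => hg.nonneg hs, fun k hk => hg (k + 1) (by lia)⟩, ?_⟩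
  rintro ⟨hg, hdiff⟩ (_ | k) hk
  · exact hg
  · exact hdiff k (by lia)

theorem congr (hδ : 0 ≤ δ) (hg : IsCompletelyMonotoneUpTo δ n g)
    (hgh : Set.EqOn g h (Set.Ioi 0)) : IsCompletelyMonotoneUpTo δ n h := by
  induction n generalizing g h with
  | zero => exact zero_iff.2 fun s hs => hgh hs ▸ hg.nonneg hs
  | succ n ih =>
    refine succ_iff.2 ⟨fun s hs => hgh hs ▸ hg.nonneg hs, ih (succ_iff.1 hg).2 fun s hs => ?_⟩
    simp only [neg_fwdDiff_apply, hgh hs, hgh (add_pos_of_pos_of_nonneg hs hδ)]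

theorem add (hg : IsCompletelyMonotoneUpTo δ n g) (hh : IsCompletelyMonotoneUpTo δ n h) :
    IsCompletelyMonotoneUpTo δ n (g + h) := by
  have hadd (s : ℝ) (hs : s > 0) : 0 ≤ (g + h) s := add_nonneg (hg.nonneg hs) (hh.nonneg hs)
  induction n generalizing g h with
  | zero => exact zero_iff.2 hadd
  | succ n ih =>
    have hg' := (succ_iff.1 hg).2
    have hh' := (succ_iff.1 hh).2
    refine succ_iff.2 ⟨hadd, ?_⟩
    rw [Pi.neg_apply, fwdDiff_add, neg_add]
    exact ih hg' hh' fun s hs => add_nonneg (hg'.nonneg hs) (hh'.nonneg hs)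

theorem comp_add_const (hg : IsCompletelyMonotoneUpTo δ n g) {c : ℝ} (hc : 0 ≤ c) :
    IsCompletelyMonotoneUpTo δ n fun s => g (s + c) := by
  have hshift (k : ℕ) : ∀ s, (-Δ_[δ])^[k] (fun s => g (s + c)) s = (-Δ_[δ])^[k] g (s + c) := by
    induction k with
    | zero => exact fun s => rfl
    | succ k ih => intro s; simp only [neg_fwdDiff_iterate_succ, ih, add_right_comm]
  intro k hk s hs
  rw [hshift]
  exact hg k hk _ (by positivity)

theorem mul (hδ : 0 ≤ δ) (hg : IsCompletelyMonotoneUpTo δ n g)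
    (hh : IsCompletelyMonotoneUpTo δ n h) : IsCompletelyMonotoneUpTo δ n (g * h) := by
  have hmul (s : ℝ) (hs : s > 0) : 0 ≤ (g * h) s := mul_nonneg (hg.nonneg hs) (hh.nonneg hs)
  induction n generalizing g h with
  | zero => exact zero_iff.2 hmul
  | succ n ih =>
    have leibniz : (-Δ_[δ]) (g * h) =
        (-Δ_[δ]) g * h + (fun s => g (s + δ)) * (-Δ_[δ]) h := by
      ext s
      simp only [Pi.add_apply, Pi.mul_apply, neg_fwdDiff_apply]
      ring
    have hgδ := (hg.mono n.le_succ).comp_add_const hδ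
    have hg' := (succ_iff.1 hg).2
    have hh' := (succ_iff.1 hh).2
    refine succ_iff.2 ⟨hmul, leibniz ▸ ?_⟩
    exact (ih hg' (hh.mono n.le_succ) fun s hs => mul_nonneg (hg'.nonneg hs) (hh.nonneg hs)).add
      (ih hgδ hh' fun s hs => mul_nonneg (hgδ.nonneg hs) (hh'.nonneg hs))

theorem const_mul {c : ℝ} (hc : 0 ≤ c) (hg : IsCompletelyMonotoneUpTo δ n g) :
    IsCompletelyMonotoneUpTo δ n fun s => c * g s := by
  have hsmul (k : ℕ) : ∀ s, (-Δ_[δ])^[k] (fun s => c * g s) s = c * (-Δ_[δ])^[k] g s := by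
    induction k with
    | zero => exact fun s => rfl
    | succ k ih => intro s; simp only [neg_fwdDiff_iterate_succ, ih, mul_sub]
  intro k hk s hs
  rw [hsmul]
  exact mul_nonneg hc (hg k hk s hs)

theorem neg_fwdDiff_of_hasDerivAt (hδ : 0 ≤ δ) (hh : IsCompletelyMonotoneUpTo δ n h)
    (hderiv : ∀ s > 0, HasDerivAt g (-h s) s) : IsCompletelyMonotoneUpTo δ n ((-Δ_[δ]) g) := by
  have hiter (k : ℕ) : ∀ s > 0, HasDerivAt ((-Δ_[δ])^[k] g) (-(-Δ_[δ])^[k] h s) s := by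
    induction k with
    | zero => exact hderiv
    | succ k ih =>
      intro s hs
      have hshift := (ih (s + δ) (by positivity)).comp_add_const s δ
      refine ((ih s hs).sub hshift).congr_deriv ?_ |>.congr_of_eventuallyEq ?_
      · rw [neg_fwdDiff_iterate_succ]
        ring
      · exact Eventually.of_forall (neg_fwdDiff_iterate_succ δ g k)
  intro k hk s hs
  have hanti : AntitoneOn ((-Δ_[δ])^[k] g) (Set.Ioi 0) := by
    refine antitoneOn_of_hasDerivWithinAt_nonpos (convex_Ioi 0)
      (fun x hx => (hiter k x hx).continuousAt.continuousWithinAt)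
      (fun x hx => (hiter k x (interior_subset hx)).hasDerivWithinAt) fun x hx => ?_
    exact neg_nonpos.2 (hh k hk x (interior_subset hx))
  rw [← Function.iterate_succ_apply, neg_fwdDiff_iterate_succ, sub_nonneg]
  exact hanti hs (add_pos_of_pos_of_nonneg hs hδ) (by linarith)

end IsCompletelyMonotoneUpTo

theorem isCompletelyMonotoneUpTo_rpow (hδ : 0 ≤ δ) {p : ℝ} (hp : p ≤ 0) :
    IsCompletelyMonotoneUpTo δ n fun s => s ^ p := by
  have hnonneg (s : ℝ) (hs : s > 0) : 0 ≤ s ^ p := rpow_nonneg hs.le p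
  induction n generalizing p with
  | zero => exact IsCompletelyMonotoneUpTo.zero_iff.2 hnonneg
  | succ n ih =>
    have hderiv : IsCompletelyMonotoneUpTo δ n fun s => -p * s ^ (p - 1) :=
      (ih (by linarith) fun s hs => rpow_nonneg hs.le _).const_mul (neg_nonneg.2 hp)
    refine IsCompletelyMonotoneUpTo.succ_iff.2
      ⟨hnonneg, hderiv.neg_fwdDiff_of_hasDerivAt hδ fun s hs => ?_⟩
    simpa only [neg_mul, neg_neg] using hasDerivAt_rpow_const (.inl hs.ne')

theorem isCompletelyMonotoneUpTo_inv (hδ : 0 ≤ δ) {φ : ℝ → ℝ} (hφ : ∀ s > 0, 0 < φ s)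
    (hdiff : IsCompletelyMonotoneUpTo δ n (Δ_[δ] φ)) : IsCompletelyMonotoneUpTo δ n φ⁻¹ := by
  have hnonneg (s : ℝ) (hs : s > 0) : 0 ≤ φ⁻¹ s := (inv_pos.2 (hφ s hs)).le
  induction n with
  | zero => exact IsCompletelyMonotoneUpTo.zero_iff.2 hnonneg
  | succ n ih =>
    have hdiff := hdiff.mono n.le_succ
    refine IsCompletelyMonotoneUpTo.succ_iff.2 ⟨hnonneg, ?_⟩
    have hquotient : Set.EqOn (Δ_[δ] φ * φ⁻¹ * fun s => φ⁻¹ (s + δ)) ((-Δ_[δ]) φ⁻¹)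
        (Set.Ioi 0) := fun s hs => by
      have hs₀ : φ s ≠ 0 := (hφ s hs).ne'
      have hs₁ : φ (s + δ) ≠ 0 := (hφ _ (add_pos_of_pos_of_nonneg hs hδ)).ne'
      simp only [neg_fwdDiff_apply, Pi.mul_apply, Pi.inv_apply, fwdDiff]
      field_simp
    exact ((hdiff.mul hδ (ih hdiff)).mul hδ ((ih hdiff).comp_add_const hδ)).congr hδ hquotient

theorem sum_range_neg_fwdDiff_iterate (δ : ℝ) (g : ℝ → ℝ) (s : ℝ) (N : ℕ) :
    ∑ m ∈ Finset.range N, (-Δ_[δ])^[m] g (s + δ) = g s - (-Δ_[δ])^[N] g s := by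
  refine Eq.trans ?_ (Finset.sum_range_sub' (fun m => (-Δ_[δ])^[m] g s) N)
  exact Finset.sum_congr rfl fun m _ => by rw [neg_fwdDiff_iterate_succ, sub_sub_cancel]

theorem summable_neg_fwdDiff_iterate (hδ : 0 ≤ δ) (hg : ∀ n, IsCompletelyMonotoneUpTo δ n g)
    {s : ℝ} (hs : δ < s) : Summable fun m => (-Δ_[δ])^[m] g s := by
  refine summable_of_sum_range_le (c := g (s - δ)) (fun m => hg m m le_rfl s (by linarith))
    fun N => ?_
  have htelescope := sum_range_neg_fwdDiff_iterate δ g (s - δ) N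
  rw [sub_add_cancel] at htelescope
  linarith [hg N N le_rfl (s - δ) (by linarith)]

theorem hasSum_neg_fwdDiff_iterate (hδ : 0 ≤ δ) (hg : ∀ n, IsCompletelyMonotoneUpTo δ n g)
    {s : ℝ} (hs : δ < s) : HasSum (fun m => (-Δ_[δ])^[m] g (s + δ)) (g s) := by
  rw [(summable_neg_fwdDiff_iterate hδ hg (by linarith)).hasSum_iff_tendsto_nat]
  simp only [sum_range_neg_fwdDiff_iterate]
  simpa only [sub_zero] using
    (summable_neg_fwdDiff_iterate hδ hg hs).tendsto_atTop_zero.const_sub (g s)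

end CompleteMonotonicity

section LaplaceOfCompletelyMonotone

variable {f g : ℝ → ℝ} {s₀ : ℝ}

theorem exp_neg_mem_unitInterval {t : ℝ} (ht : 0 < t) : exp (-t) ∈ I :=
  ⟨(exp_pos _).le, exp_le_one_iff.2 (by linarith)⟩

theorem ae_nonneg_of_hasLaplaceAt (hg : ∀ n, IsCompletelyMonotoneUpTo 1 n g)
    (hf : ∀ s > s₀, HasLaplaceAt f s (g s)) : 0 ≤ᵐ[volume.restrict (Set.Ioi 0)] f := by
  obtain ⟨s, hs⟩ := exists_gt (max s₀ 0)
  obtain ⟨hs₀, hpos⟩ := max_lt_iff.1 hs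
  have hX (t : ℝ) (ht : t ∈ Set.Ioi 0) :
      (Set.projIcc 0 1 zero_le_one (exp (-t)) : ℝ) = exp (-t) := by
    rw [Set.projIcc_of_mem _ (exp_neg_mem_unitInterval ht)]
  suffices hexp : 0 ≤ᵐ[volume.restrict (Set.Ioi 0)] fun t => exp (-(s * t)) * f t from
    hexp.mono fun t ht => (mul_nonneg_iff_of_pos_left (exp_pos _)).1 ht
  refine ae_nonneg_of_moments (X := fun t => Set.projIcc 0 1 zero_le_one (exp (-t)))
    (Z := fun x => -log x) ?_ ?_ ?_ (hf s hs₀).1 fun k m => ?_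
  · exact (continuous_projIcc.comp (by fun_prop)).measurable
  · fun_prop
  · refine ae_restrict_of_forall_mem measurableSet_Ioi fun t ht => ?_
    rw [hX t ht, log_exp, neg_neg]
  · have hmoment := hasLaplaceAt_neg_fwdDiff_iterate hf zero_le_one m (s + k)
      (by linarith [k.cast_nonneg (α := ℝ)])
    have heq : ∫ t in Set.Ioi 0, (Set.projIcc 0 1 zero_le_one (exp (-t)) : ℝ) ^ k *
        (1 - Set.projIcc 0 1 zero_le_one (exp (-t))) ^ m * (exp (-(s * t)) * f t) =
          (-Δ_[1])^[m] g (s + k) := by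
      rw [← hmoment.2]
      refine setIntegral_congr_fun measurableSet_Ioi fun t ht => ?_
      have hexp : exp (-((s + k) * t)) = exp (-(s * t)) * exp (-t) ^ k := by
        rw [← exp_nat_mul, ← exp_add]
        ring_nf
      simp only [hX t ht, hexp, neg_one_mul]
      ring
    exact heq ▸ hg m m le_rfl _ (by positivity)

theorem hasLaplaceAt_of_hasLaplaceAt_add {δ s : ℝ} (hδ : 0 < δ)
    (hg : ∀ n, IsCompletelyMonotoneUpTo δ n g) (hf₀ : 0 ≤ᵐ[volume.restrict (Set.Ioi 0)] f)
    (hf : ∀ s > s₀, HasLaplaceAt f s (g s)) (hδs : δ < s) (hs : s₀ < s + δ) :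
    HasLaplaceAt f s (g s) := by
  have hterm (m : ℕ) : HasLaplaceAt (fun t => (1 - exp (-δ * t)) ^ m * f t) (s + δ)
      ((-Δ_[δ])^[m] g (s + δ)) := hasLaplaceAt_neg_fwdDiff_iterate hf hδ.le m _ hs
  have hratio (t : ℝ) (ht : 0 < t) : 0 ≤ 1 - exp (-δ * t) ∧ 1 - exp (-δ * t) < 1 :=
    ⟨sub_nonneg.2 (exp_le_one_iff.2 (by nlinarith)), sub_lt_self _ (exp_pos _)⟩
  have habs (m : ℕ) : HasLaplaceAt (fun t => |(1 - exp (-δ * t)) ^ m * f t|) (s + δ)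
      ((-Δ_[δ])^[m] g (s + δ)) := by
    refine (hterm m).congr_ae ?_
    filter_upwards [hf₀, ae_restrict_mem measurableSet_Ioi] with t hft ht
    exact (abs_of_nonneg (mul_nonneg (pow_nonneg (hratio t ht).1 m) hft)).symm
  have hgregory := hasSum_neg_fwdDiff_iterate hδ.le hg hδs
  have hsum := (HasLaplaceAt.tsum hterm habs hgregory.summable).exp_mul (δ := -δ)
  rw [hgregory.tsum_eq, add_neg_cancel_right] at hsum
  refine hsum.congr fun t ht => ?_
  simp only [tsum_mul_right, tsum_geometric_of_lt_one (hratio t ht).1 (hratio t ht).2]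
  rw [sub_sub_cancel, ← mul_assoc, mul_inv_cancel₀ (exp_ne_zero _), one_mul]

theorem hasLaplaceAt_of_isCompletelyMonotone
    (hg : ∀ δ > 0, ∀ n, IsCompletelyMonotoneUpTo δ n g)
    (hf : ∀ s > s₀, HasLaplaceAt f s (g s)) {s : ℝ} (hs : 0 < s) : HasLaplaceAt f s (g s) := by
  have hf₀ := ae_nonneg_of_hasLaplaceAt (hg 1 one_pos) hf
  set δ := s / 2
  have hδ : 0 < δ := half_pos hs
  have hdescent (n : ℕ) : ∀ s' > max δ (s₀ - n * δ), HasLaplaceAt f s' (g s') := by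
    induction n with
    | zero => simpa using fun s' _ => hf s'
    | succ n ih =>
      intro s' hs'
      push_cast at hs'
      obtain ⟨hδs', hs₀⟩ := max_lt_iff.1 hs'
      exact hasLaplaceAt_of_hasLaplaceAt_add hδ (hg δ hδ) hf₀ ih hδs'
        (max_lt (by linarith) (by linarith))
  obtain ⟨n, hn⟩ := exists_nat_gt (s₀ / δ)
  have hn' : s₀ < n * δ := (div_lt_iff₀ hδ).1 hn
  exact hdescent n s (max_lt (half_lt_self hs) (by linarith))

end LaplaceOfCompletelyMonotone

section MittagLefflerSeries

theorem prod_range_add_one_add_div_factorial (k n : ℕ) :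
    (∏ j ∈ Finset.range n, ((k : ℝ) + 1 + j)) / n.factorial = (n + k).choose k := by
  have hprod : ∏ j ∈ Finset.range n, ((k : ℝ) + 1 + j) = n.factorial * (n + k).choose k := by
    have hnat := (k + 1).ascFactorial_eq_prod_range n
    rw [Nat.ascFactorial_eq_factorial_mul_choose, add_comm k n, Nat.choose_symm_add] at hnat
    exact_mod_cast hnat.symm
  rw [hprod, mul_div_cancel_left₀ _ (Nat.cast_ne_zero.2 n.factorial_ne_zero)]

theorem hasSum_inv_one_sub_pow_mul_pow {x y : ℝ} (hxy : |x| + |y| < 1) :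
    HasSum (fun k : ℕ => 1 / (1 - y) ^ (k + 1) * x ^ k) (1 - x - y)⁻¹ := by
  have hy : 0 < 1 - y := by linarith [le_abs_self y, abs_nonneg x]
  have hratio : |x / (1 - y)| < 1 := by
    rw [abs_div, abs_of_pos hy, div_lt_one hy]
    linarith [le_abs_self y]
  have hlim : (1 - y)⁻¹ * (1 - x / (1 - y))⁻¹ = (1 - x - y)⁻¹ := by
    rw [← mul_inv, mul_one_sub, mul_div_cancel₀ _ hy.ne', sub_right_comm]
  rw [← hlim]
  refine ((hasSum_geometric_of_abs_lt_one hratio).mul_left (1 - y)⁻¹).congr_fun fun k => ?_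
  rw [div_pow]
  field_simp
  ring

theorem hasSum_choose_mul_pow_mul_pow {x y : ℝ} (hxy : |x| + |y| < 1) :
    HasSum (fun p : ℕ × ℕ => ((p.2 + p.1).choose p.1 : ℝ) * y ^ p.2 * x ^ p.1)
      (1 - x - y)⁻¹ := by
  have hrow {x y : ℝ} (hxy : |x| + |y| < 1) (k : ℕ) :
      HasSum (fun n : ℕ => ((n + k).choose k : ℝ) * y ^ n * x ^ k)
        (1 / (1 - y) ^ (k + 1) * x ^ k) :=
    (hasSum_choose_mul_geometric_of_norm_lt_one k
      (r := y) (by rw [norm_eq_abs]; linarith [abs_nonneg x])).mul_right (x ^ k)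
  have habs : |(|x|)| + |(|y|)| < 1 := by rwa [abs_abs, abs_abs]
  have hsummable : Summable fun p : ℕ × ℕ =>
      ((p.2 + p.1).choose p.1 : ℝ) * y ^ p.2 * x ^ p.1 := by
    refine Summable.of_norm ?_
    simp only [norm_mul, norm_pow, norm_eq_abs, Nat.abs_cast]
    refine (summable_prod_of_nonneg fun p => by positivity).2 ⟨fun k => (hrow habs k).summable, ?_⟩
    simp only [(hrow habs _).tsum_eq]
    exact (hasSum_inv_one_sub_pow_mul_pow habs).summable
  rw [(hasSum_inv_one_sub_pow_mul_pow hxy).unique (hsummable.hasSum.prod_fiberwise (hrow hxy))]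
  exact hsummable.hasSum

variable {α β γ s z w t : ℝ}

/-- The summand of index `p = (k, n)` when every Mittag-Leffler function in
`t ^ (γ - 1) * ∑' k, (w * t ^ β) ^ k * ml α (γ + β * k) (k + 1) (z * t ^ α)`
is expanded in powers of its argument. -/
def mittagLefflerTerm (α β γ z w : ℝ) (p : ℕ × ℕ) (t : ℝ) : ℝ :=
  (p.2 + p.1).choose p.1 * z ^ p.2 * w ^ p.1 / Gamma (p.2 * α + (γ + β * p.1)) *
    t ^ (p.2 * α + (γ + β * p.1) - 1)

theorem hasLaplaceAt_mittagLefflerTerm (hα : 0 ≤ α) (hβ : 0 ≤ β) (hγ : 0 < γ) (hs : 0 < s)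
    (p : ℕ × ℕ) : HasLaplaceAt (mittagLefflerTerm α β γ z w p) s
      (s ^ (-γ) * ((p.2 + p.1).choose p.1 * (z * s ^ (-α)) ^ p.2 * (w * s ^ (-β)) ^ p.1)) := by
  have hexponent : 0 < p.2 * α + (γ + β * p.1) := by positivity
  have hpow : s ^ (-(p.2 * α + (γ + β * p.1))) =
      s ^ (-γ) * (s ^ (-α)) ^ p.2 * (s ^ (-β)) ^ p.1 := by
    rw [← rpow_mul_natCast hs.le, ← rpow_mul_natCast hs.le, ← rpow_add hs, ← rpow_add hs]
    ring_nf
  have hvalue : (p.2 + p.1).choose p.1 * z ^ p.2 * w ^ p.1 / Gamma (p.2 * α + (γ + β * p.1)) *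
      (Gamma (p.2 * α + (γ + β * p.1)) * s ^ (-(p.2 * α + (γ + β * p.1)))) =
        s ^ (-γ) * ((p.2 + p.1).choose p.1 * (z * s ^ (-α)) ^ p.2 * (w * s ^ (-β)) ^ p.1) := by
    rw [← mul_assoc, div_mul_cancel₀ _ (Gamma_pos_of_pos hexponent).ne', hpow]
    ring
  rw [← hvalue]
  exact (hasLaplaceAt_rpow hexponent hs).const_mul _

theorem abs_mittagLefflerTerm (hα : 0 ≤ α) (hβ : 0 ≤ β) (hγ : 0 < γ) (ht : 0 ≤ t) (p : ℕ × ℕ) :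
    |mittagLefflerTerm α β γ z w p t| = mittagLefflerTerm α β γ |z| |w| p t := by
  have hΓ : 0 < Gamma (p.2 * α + (γ + β * p.1)) := Gamma_pos_of_pos (by positivity)
  simp only [mittagLefflerTerm, abs_mul, abs_div, abs_pow, Nat.abs_cast, abs_of_pos hΓ,
    abs_rpow_of_nonneg ht, abs_of_nonneg ht]

theorem tsum_mittagLefflerTerm (ht : 0 < t)
    (hsum : Summable fun p => mittagLefflerTerm α β γ z w p t) :
    ∑' p, mittagLefflerTerm α β γ z w p t =
      t ^ (γ - 1) * ∑' k : ℕ, (w * t ^ β) ^ k * ml α (γ + β * k) (k + 1) (z * t ^ α) := by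
  rw [hsum.tsum_prod, ← tsum_mul_left]
  refine tsum_congr fun k => ?_
  rw [ml, ← tsum_mul_left, ← tsum_mul_left]
  refine tsum_congr fun n => ?_
  have hpow : t ^ (n * α + (γ + β * k) - 1) = t ^ (γ - 1) * (t ^ α) ^ n * (t ^ β) ^ k := by
    rw [← rpow_mul_natCast ht.le, ← rpow_mul_natCast ht.le, ← rpow_add ht, ← rpow_add ht]
    ring_nf
  rw [prod_range_add_one_add_div_factorial, mittagLefflerTerm, hpow]
  ring

theorem hasLaplaceAt_tsum_ml (hα : 0 ≤ α) (hβ : 0 ≤ β) (hγ : 0 < γ) (hs : 0 < s)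
    (hconv : |w| * s ^ (-β) + |z| * s ^ (-α) < 1) :
    HasLaplaceAt (fun t => t ^ (γ - 1) *
        ∑' k : ℕ, (w * t ^ β) ^ k * ml α (γ + β * k) (k + 1) (z * t ^ α)) s
      (s ^ (-γ) * (1 - w * s ^ (-β) - z * s ^ (-α))⁻¹) := by
  have hterm := hasLaplaceAt_mittagLefflerTerm (z := z) (w := w) hα hβ hγ hs
  have habs (p : ℕ × ℕ) :=
    (hasLaplaceAt_mittagLefflerTerm (z := |z|) (w := |w|) hα hβ hγ hs p).congr
      fun t ht => (abs_mittagLefflerTerm (z := z) (w := w) hα hβ hγ (le_of_lt ht) p).symm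
  have hαs : 0 < s ^ (-α) := rpow_pos_of_pos hs _
  have hβs : 0 < s ^ (-β) := rpow_pos_of_pos hs _
  have hsum : HasSum _ (1 - w * s ^ (-β) - z * s ^ (-α))⁻¹ :=
    hasSum_choose_mul_pow_mul_pow (by simpa only [abs_mul, abs_of_pos hαs, abs_of_pos hβs])
  have hsum_abs := hasSum_choose_mul_pow_mul_pow (x := |w| * s ^ (-β)) (y := |z| * s ^ (-α))
    (by simpa only [abs_mul, abs_abs, abs_of_pos hαs, abs_of_pos hβs])
  have hsummable := hsum_abs.summable.mul_left (s ^ (-γ))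
  rw [← (hsum.mul_left (s ^ (-γ))).tsum_eq]
  refine (HasLaplaceAt.tsum hterm habs hsummable).congr_ae ?_
  filter_upwards [HasLaplaceAt.ae_summable hterm habs hsummable,
    ae_restrict_mem measurableSet_Ioi] with t hsum_t ht
  exact tsum_mittagLefflerTerm ht hsum_t

end MittagLefflerSeries

section InterarrivalTime

variable {α₁ α₂ C₁ C₂ lam : ℝ}

theorem isCompletelyMonotoneUpTo_inv_add_rpow_add_rpow (hα₂ : 0 ≤ α₂) (hα₂_le : α₂ ≤ 1)
    (hα₁ : 0 ≤ α₁) (hα₁_le : α₁ ≤ 1) (hC₁ : 0 < C₁) (hC₂ : 0 ≤ C₂) (hlam : 0 ≤ lam)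
    {δ : ℝ} (hδ : 0 ≤ δ) (n : ℕ) :
    IsCompletelyMonotoneUpTo δ n fun s => (C₁ * s ^ α₁ + C₂ * s ^ α₂ + lam)⁻¹ := by
  have hrpow {C α : ℝ} (hC : 0 ≤ C) (hα : 0 ≤ α) (hα' : α ≤ 1) :
      IsCompletelyMonotoneUpTo δ n fun s => C * (α * s ^ (α - 1)) :=
    ((isCompletelyMonotoneUpTo_rpow hδ (by linarith)).const_mul hα).const_mul hC
  have hderiv (s : ℝ) (hs : s > 0) : HasDerivAt (fun s => C₁ * s ^ α₁ + C₂ * s ^ α₂ + lam)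
      (C₁ * (α₁ * s ^ (α₁ - 1)) + C₂ * (α₂ * s ^ (α₂ - 1))) s :=
    (((hasDerivAt_rpow_const (.inl hs.ne')).const_mul C₁).add
      ((hasDerivAt_rpow_const (.inl hs.ne')).const_mul C₂)).add_const lam
  have hdiff := ((hrpow hC₁.le hα₁ hα₁_le).add (hrpow hC₂ hα₂ hα₂_le)).neg_fwdDiff_of_hasDerivAt hδ
    fun s hs => (hderiv s hs).neg
  refine isCompletelyMonotoneUpTo_inv hδ (fun s hs => ?_) (hdiff.congr hδ fun s _ => ?_)
  · have := rpow_pos_of_pos hs α₁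
    positivity
  · simp only [neg_fwdDiff_apply, fwdDiff, Pi.neg_apply]
    ring

theorem exists_forall_gt_mul_rpow_neg_add_mul_rpow_neg_lt_one (a b : ℝ) {α β : ℝ} (hα : 0 < α)
    (hβ : 0 < β) : ∃ s₀ > 0, ∀ s > s₀, a * s ^ (-β) + b * s ^ (-α) < 1 := by
  have hlim : Tendsto (fun s => a * s ^ (-β) + b * s ^ (-α)) atTop (nhds 0) := by
    simpa only [mul_zero, add_zero] using
      ((tendsto_rpow_neg_atTop hβ).const_mul a).add ((tendsto_rpow_neg_atTop hα).const_mul b)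
  obtain ⟨s₀, hs₀⟩ := eventually_atTop.1 (hlim.eventually_lt_const one_pos)
  refine ⟨max s₀ 1, by positivity, fun s hs => hs₀ s ((le_max_left _ _).trans hs.le)⟩

theorem hasLaplaceAt_interarrival_density (hα₂₁ : α₂ ≤ α₁) (hα₁ : 0 < α₁) (hC₁ : 0 < C₁) {s : ℝ}
    (hs : 0 < s) (hconv : |-C₂ / C₁| * s ^ (-(α₁ - α₂)) + |-lam / C₁| * s ^ (-α₁) < 1) :
    HasLaplaceAt (fun t => lam * t ^ (α₁ - 1) / C₁ *
        ∑' k : ℕ, (-(C₂ * t ^ (α₁ - α₂) / C₁)) ^ k *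
          ml α₁ (α₁ + (α₁ - α₂) * k) (k + 1) (-(lam * t ^ α₁ / C₁))) s
      (lam * (C₁ * s ^ α₁ + C₂ * s ^ α₂ + lam)⁻¹) := by
  have hseries :=
    (hasLaplaceAt_tsum_ml hα₁.le (sub_nonneg.2 hα₂₁) hα₁ hs hconv).const_mul (lam / C₁)
  have hvalue : lam / C₁ * (s ^ (-α₁) *
      (1 - -C₂ / C₁ * s ^ (-(α₁ - α₂)) - -lam / C₁ * s ^ (-α₁))⁻¹) =
        lam * (C₁ * s ^ α₁ + C₂ * s ^ α₂ + lam)⁻¹ := by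
    have hpow₁ : s ^ α₁ * s ^ (-α₁) = 1 := by rw [← rpow_add hs, add_neg_cancel, rpow_zero]
    have hpow₂ : s ^ α₁ * s ^ (-(α₁ - α₂)) = s ^ α₂ := by rw [← rpow_add hs]; ring_nf
    have hfactor : C₁ * s ^ α₁ + C₂ * s ^ α₂ + lam = C₁ * s ^ α₁ *
        (1 - -C₂ / C₁ * s ^ (-(α₁ - α₂)) - -lam / C₁ * s ^ (-α₁)) := by
      rw [← hpow₂]
      field_simp
      linear_combination -lam * hpow₁
    rw [hfactor, rpow_neg hs.le α₁, mul_inv, mul_inv]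
    ring
  rw [hvalue] at hseries
  refine hseries.congr fun t _ => ?_
  have hz : -lam / C₁ * t ^ α₁ = -(lam * t ^ α₁ / C₁) := by ring
  have hw : -C₂ / C₁ * t ^ (α₁ - α₂) = -(C₂ * t ^ (α₁ - α₂) / C₁) := by ring
  simp only [hz, hw]
  ring

theorem mfpp_interarrival_laplace_transform_general (hα₂ : 0 ≤ α₂) (hα₂₁ : α₂ < α₁) (hα₁ : α₁ ≤ 1)
    (hC₁ : 0 < C₁) (hC₂ : 0 ≤ C₂) (hlam : 0 ≤ lam) {f_W : ℝ → ℝ}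
    (hf : ∀ t : ℝ, 0 < t →
      f_W t = lam * t ^ (α₁ - 1) / C₁ *
        ∑' k : ℕ, (-(C₂ * t ^ (α₁ - α₂) / C₁)) ^ k *
          ml α₁ (α₁ + (α₁ - α₂) * k) (k + 1) (-(lam * t ^ α₁ / C₁)))
    {s : ℝ} (hs : 0 < s) :
    HasLaplaceAt f_W s (lam / (C₁ * s ^ α₁ + C₂ * s ^ α₂ + lam)) := by
  have hα₁_pos : 0 < α₁ := hα₂.trans_lt hα₂₁
  have hmonotone (δ : ℝ) (hδ : δ > 0) (n : ℕ) :=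
    (isCompletelyMonotoneUpTo_inv_add_rpow_add_rpow hα₂ (hα₂₁.le.trans hα₁) hα₁_pos.le hα₁ hC₁ hC₂
      hlam hδ.le n).const_mul hlam
  obtain ⟨s₀, hs₀, hconv⟩ := exists_forall_gt_mul_rpow_neg_add_mul_rpow_neg_lt_one
    |-C₂ / C₁| |-lam / C₁| hα₁_pos (sub_pos.2 hα₂₁)
  have hlarge (s : ℝ) (hs : s > s₀) :=
    (hasLaplaceAt_interarrival_density hα₂₁.le hα₁_pos hC₁ (hs₀.trans hs) (hconv s hs)).congr
      fun t ht => (hf t ht).symm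
  exact hasLaplaceAt_of_isCompletelyMonotone hmonotone hlarge hs

end InterarrivalTime

/-- The Laplace transform of the interarrival time density of the MFPP:
`∫₀^∞ e^{−st} f_W(t) dt = λ / (C₁ s^{α₁} + C₂ s^{α₂} + λ)`. -/
theorem mfpp_interarrival_laplace_transform
    (α₁ α₂ C₁ C₂ lam : ℝ)
    (hα₂ : 0 < α₂) (hα₂₁ : α₂ < α₁) (hα₁ : α₁ < 1)
    (hC₁ : 0 < C₁) (hC₂ : 0 ≤ C₂) (hC : C₁ + C₂ = 1) (hlam : 0 < lam)
    (f_W : ℝ → ℝ)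
    (hf : ∀ t : ℝ, 0 < t →
      f_W t = lam * t ^ (α₁ - 1) / C₁ *
        ∑' k : ℕ, (-(C₂ * t ^ (α₁ - α₂) / C₁)) ^ k *
          ml α₁ (α₁ + (α₁ - α₂) * k) (k + 1) (-(lam * t ^ α₁ / C₁)))
    (s : ℝ) (hs : 0 < s) (hdom : C₂ * s ^ α₂ < C₁ * s ^ α₁ + lam) :
    ∫ t in Set.Ioi (0 : ℝ), Real.exp (-(s * t)) * f_W t =
      lam / (C₁ * s ^ α₁ + C₂ * s ^ α₂ + lam) :=
  (mfpp_interarrival_laplace_transform_general hα₂.le hα₂₁ hα₁.le hC₁ hC₂ hlam.le hf hs).2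

end
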